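/- arXiv:2307.06438 — 2 statements merged into one kernel-verified Lean document; each statement's English description precedes it below -/
import Mathlib

section
/- Let Ω_Φ be the operator on 4-forms on ℝ^8 defined by (Ω_Φ(σ))_{ijkl} = σ_{ijpq}Φ_{pqkl} + σ_{ikpq}Φ_{pqlj} + σ_{ilpq}Φ_{pqjk} + σ_{jkpq}Φ_{pqil} + σ_{jlpq}Φ_{pqki} + σ_{klpq}Φ_{pqij}. Then Ω_Φ(Φ) = −24 Φ. -/
/-!
We work in ℝ⁸ with the standard basis `e₀, …, e₇`.  A `k`-form is a totally antisymmetric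
map `(Fin 8)^k → ℝ`; repeated indices are summed over `Fin 8` and `kd` is the Kronecker
delta.  `Phi` is the fundamental 4-form of the standard `Spin(7)`-structure on ℝ⁸,
`Φ = -e₀₁₂₇ + e₀₂₃₆ - e₀₃₄₇ - e₀₅₆₇ + e₀₁₄₆ + e₀₂₄₅ - e₀₁₃₅
     - e₃₄₅₆ - e₁₄₅₇ - e₁₂₅₆ - e₁₂₃₄ - e₂₃₅₇ - e₁₃₆₇ + e₂₄₆₇`.
-/

noncomputable section

/-- Kronecker delta on `Fin 8`. -/
def kd (a b : Fin 8) : ℝ := if a = b then 1 else 0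

/-- Component at the indices `(i,j,k,l)` of the wedge product `e_a ∧ e_b ∧ e_c ∧ e_d`
of standard coordinate 1-forms, normalized so that `(e_a ∧ e_b ∧ e_c ∧ e_d)_{abcd} = 1`;
it is the alternating sum of products of Kronecker deltas. -/
def wedge4 (a b c d i j k l : Fin 8) : ℝ :=
  Matrix.det !![kd a i, kd a j, kd a k, kd a l;
                kd b i, kd b j, kd b k, kd b l;
                kd c i, kd c j, kd c k, kd c l;
                kd d i, kd d j, kd d k, kd d l]

/-- The fundamental 4-form `Φ` of the standard `Spin(7)`-structure on `ℝ⁸`, in components: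
the totally antisymmetric 4-tensor with `Φ_{0127} = -1`, `Φ_{0236} = 1`, `Φ_{0347} = -1`,
`Φ_{0567} = -1`, `Φ_{0146} = 1`, `Φ_{0245} = 1`, `Φ_{0135} = -1`, `Φ_{3456} = -1`,
`Φ_{1457} = -1`, `Φ_{1256} = -1`, `Φ_{1234} = -1`, `Φ_{2357} = -1`, `Φ_{1367} = -1`,
`Φ_{2467} = 1`, all components not obtained from these by permutation being zero. -/
def Phi (i j k l : Fin 8) : ℝ :=
    -wedge4 0 1 2 7 i j k l + wedge4 0 2 3 6 i j k l - wedge4 0 3 4 7 i j k l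
  - wedge4 0 5 6 7 i j k l + wedge4 0 1 4 6 i j k l + wedge4 0 2 4 5 i j k l
  - wedge4 0 1 3 5 i j k l - wedge4 3 4 5 6 i j k l - wedge4 1 4 5 7 i j k l
  - wedge4 1 2 5 6 i j k l - wedge4 1 2 3 4 i j k l - wedge4 2 3 5 7 i j k l
  - wedge4 1 3 6 7 i j k l + wedge4 2 4 6 7 i j k l

/-!
The seven 2-forms `ω_m = e₀ ∧ e_m - ι_{e_m} ι_{e₀} Φ` are pairwise orthogonal of square norm `8`
as 2-tensors, and `Φ` is recovered from them as `Φ = D - ∑ m, ω_m ⊗ ω_m`, where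
`D_{ijkl} = δ_{ik} δ_{jl} - δ_{il} δ_{jk}`.  Contraction over a pair of indices is multiplication
of operators on 2-tensors.  Since `D` doubles antisymmetric tensors, squaring this decomposition
gives `Φ_{ijpq} Φ_{pqkl} = 6 D_{ijkl} - 4 Φ_{ijkl}`.  In the six terms of `Ω_Φ(Φ)` the `D`'s
cancel, and each term contributes `-4 Φ_{ijkl}` because `(i, j, k, l)` is permuted evenly.
-/

open scoped Matrix

section Antisymmetrizer

variable {n m R : Type*} [DecidableEq n] [CommRing R]

variable (n R) in
/-- Twice the projection of `n × n → R`, viewed as the space of 2-tensors, onto the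
antisymmetric tensors; its entry at `((i, j), (k, l))` is `δ_{ik} δ_{jl} - δ_{il} δ_{jk}`. -/
def antisymmetrizer : Matrix (n × n) (n × n) R :=
  1 - (1 : Matrix (n × n) (n × n) R).submatrix (Equiv.prodComm n n) id

theorem antisymmetrizer_apply (i j k l : n) :
    antisymmetrizer n R (i, j) (k, l) =
      (1 : Matrix n n R) i k * (1 : Matrix n n R) j l
        - (1 : Matrix n n R) i l * (1 : Matrix n n R) j k := by
  simp only [antisymmetrizer, Matrix.sub_apply, Matrix.submatrix_apply, Matrix.one_apply, id_eq,
    Equiv.coe_prodComm, Prod.swap_prod_mk, Prod.ext_iff, ite_and, mul_ite, mul_one, mul_zero,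
    sub_left_inj]
  split_ifs <;> rfl

theorem transpose_antisymmetrizer : (antisymmetrizer n R)ᵀ = antisymmetrizer n R := by
  ext ⟨i, j⟩ ⟨k, l⟩
  simp only [Matrix.transpose_apply, antisymmetrizer_apply, Matrix.one_apply, eq_comm (a := k),
    eq_comm (a := l)]
  ring

variable [Fintype n]

theorem vecMul_antisymmetrizer_of_swap {v : n × n → R} (hv : ∀ x, v x.swap = -v x) :
    v ᵥ* antisymmetrizer n R = (2 : R) • v := by
  ext x
  rw [antisymmetrizer, Matrix.vecMul_sub, Matrix.vecMul_one, Matrix.submatrix_vecMul_equiv,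
    Matrix.vecMul_one, two_smul, ← sub_neg_eq_add]
  exact congrArg (v x - ·) (hv x)

theorem mul_antisymmetrizer_of_swap {A : Matrix m (n × n) R}
    (hA : ∀ r x, A r x.swap = -A r x) : A * antisymmetrizer n R = (2 : R) • A := by
  ext r x
  rw [Matrix.mul_apply_eq_vecMul, vecMul_antisymmetrizer_of_swap (hA r)]
  rfl

theorem antisymmetrizer_mul_self :
    antisymmetrizer n R * antisymmetrizer n R = (2 : R) • antisymmetrizer n R :=
  mul_antisymmetrizer_of_swap fun ⟨i, j⟩ ⟨k, l⟩ => by simp [antisymmetrizer_apply]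

theorem antisymmetrizer_sub_transpose_mul_self_sq [Fintype m] [DecidableEq m]
    {J : Matrix m (n × n) R} {c : R} (hJ : ∀ r x, J r x.swap = -J r x)
    (hJJ : J * Jᵀ = c • 1) :
    (antisymmetrizer n R - Jᵀ * J) ^ 2 =
      (c - 2) • antisymmetrizer n R
        - (c - 4) • (antisymmetrizer n R - Jᵀ * J) := by
  have mul_right : J * antisymmetrizer n R = (2 : R) • J :=
    mul_antisymmetrizer_of_swap hJ
  have mul_left : antisymmetrizer n R * Jᵀ = (2 : R) • Jᵀ := by
    simpa [transpose_antisymmetrizer] using congrArg Matrix.transpose mul_right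
  have mul_gram : Jᵀ * J * (Jᵀ * J) = c • (Jᵀ * J) := by
    rw [Matrix.mul_assoc, ← Matrix.mul_assoc J, hJJ, Matrix.smul_mul, Matrix.one_mul,
      Matrix.mul_smul]
  rw [sq, Matrix.sub_mul, Matrix.mul_sub, Matrix.mul_sub, antisymmetrizer_mul_self,
    ← Matrix.mul_assoc, mul_left, Matrix.mul_assoc Jᵀ, mul_right, mul_gram, Matrix.smul_mul,
    Matrix.mul_smul]
  module

end Antisymmetrizer

theorem kd_eq_one_apply (a b : Fin 8) : kd a b = (1 : Matrix (Fin 8) (Fin 8) ℝ) a b := rfl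

theorem kd_comm (a b : Fin 8) : kd a b = kd b a :=
  if_congr eq_comm rfl rfl

theorem kd_eq_sum (a b : Fin 8) : kd a b = ∑ p, kd p a * kd p b := by
  simp [kd, eq_comm]

/-- The 2-form `e_a ∧ e_b`, as a vector indexed by pairs of indices. -/
def wedge2 (a b : Fin 8) (x : Fin 8 × Fin 8) : ℝ :=
  kd a x.1 * kd b x.2 - kd a x.2 * kd b x.1

theorem wedge2_eq_antisymmetrizer (a b : Fin 8) (x : Fin 8 × Fin 8) :
    wedge2 a b x = antisymmetrizer (Fin 8) ℝ x (a, b) := by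
  obtain ⟨i, j⟩ := x
  simp only [wedge2, antisymmetrizer_apply, ← kd_eq_one_apply, kd_comm i, kd_comm j]
  ring

theorem dotProduct_wedge2_of_swap {ω : Fin 8 × Fin 8 → ℝ} (hω : ∀ x, ω x.swap = -ω x)
    (a b : Fin 8) : ω ⬝ᵥ wedge2 a b = 2 * ω (a, b) := by
  simpa [Matrix.vecMul, dotProduct, wedge2_eq_antisymmetrizer] using
    congrFun (vecMul_antisymmetrizer_of_swap hω) (a, b)

theorem wedge4_eq_wedge2_mul_wedge2 (a b c d i j k l : Fin 8) :
    wedge4 a b c d i j k l =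
      wedge2 a b (i, j) * wedge2 c d (k, l) - wedge2 a c (i, j) * wedge2 b d (k, l)
        + wedge2 a d (i, j) * wedge2 b c (k, l) + wedge2 b c (i, j) * wedge2 a d (k, l)
        - wedge2 b d (i, j) * wedge2 a c (k, l) + wedge2 c d (i, j) * wedge2 a b (k, l) := by
  simp [wedge4, wedge2, Matrix.det_succ_row_zero, Fin.sum_univ_succ, Fin.succAbove]
  ring

theorem wedge4_rotate_last_three (a b c d i j k l : Fin 8) :
    wedge4 a b c d i k l j = wedge4 a b c d i j k l := by
  simp only [wedge4_eq_wedge2_mul_wedge2, wedge2]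
  ring

theorem wedge4_swap_pairs (a b c d i j k l : Fin 8) :
    wedge4 a b c d k l i j = wedge4 a b c d i j k l := by
  simp only [wedge4_eq_wedge2_mul_wedge2]
  ring

theorem Phi_rotate_last_three (i j k l : Fin 8) : Phi i k l j = Phi i j k l := by
  simp only [Phi, wedge4_rotate_last_three _ _ _ _ i j k l]

theorem Phi_swap_pairs (i j k l : Fin 8) : Phi k l i j = Phi i j k l := by
  simp only [Phi, wedge4_swap_pairs _ _ _ _ i j k l]

/-- The 2-forms `e₀ ∧ e_{m+1} - ι_{e_{m+1}} ι_{e₀} Φ`, `m = 0, …, 6`, an orthogonal basis of the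
seven-dimensional summand `Λ²₇` of the `Spin(7)`-module of 2-forms. -/
def lambdaSevenBasis : Fin 7 → Fin 8 × Fin 8 → ℝ :=
  ![wedge2 0 1 + wedge2 2 7 - wedge2 4 6 + wedge2 3 5,
    wedge2 0 2 - wedge2 1 7 - wedge2 3 6 - wedge2 4 5,
    wedge2 0 3 + wedge2 2 6 + wedge2 4 7 - wedge2 1 5,
    wedge2 0 4 - wedge2 3 7 + wedge2 1 6 + wedge2 2 5,
    wedge2 0 5 + wedge2 6 7 - wedge2 2 4 + wedge2 1 3,
    wedge2 0 6 - wedge2 2 3 - wedge2 5 7 - wedge2 1 4,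
    wedge2 0 7 + wedge2 1 2 + wedge2 3 4 + wedge2 5 6]

theorem lambdaSevenBasis_swap (m : Fin 7) (x : Fin 8 × Fin 8) :
    lambdaSevenBasis m x.swap = -lambdaSevenBasis m x := by
  fin_cases m <;>
    simp only [lambdaSevenBasis, Fin.zero_eta, Fin.mk_one, Fin.reduceFinMk, Matrix.cons_val,
      Pi.add_apply, Pi.sub_apply, wedge2, Prod.fst_swap, Prod.snd_swap] <;>
    ring

theorem lambdaSevenBasis_dotProduct (m m' : Fin 7) :
    lambdaSevenBasis m ⬝ᵥ lambdaSevenBasis m' = if m = m' then 8 else 0 := by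
  have pairing (a b : Fin 8) : lambdaSevenBasis m ⬝ᵥ wedge2 a b = 2 * lambdaSevenBasis m (a, b) :=
    dotProduct_wedge2_of_swap (lambdaSevenBasis_swap m) a b
  generalize hω : lambdaSevenBasis m = ω at pairing ⊢
  fin_cases m' <;>
    simp only [lambdaSevenBasis, Fin.zero_eta, Fin.mk_one, Fin.reduceFinMk, Matrix.cons_val,
      dotProduct_add, dotProduct_sub, pairing] <;>
    subst hω <;> fin_cases m <;>
    simp only [lambdaSevenBasis, Fin.zero_eta, Fin.mk_one, Fin.reduceFinMk, Matrix.cons_val,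
      Pi.add_apply, Pi.sub_apply, wedge2, kd, Fin.reduceEq, Fin.isValue, ite_true, ite_false] <;>
    norm_num

/-- `Φ` as an operator on 2-tensors, so that contracting two copies of `Φ` over a pair of indices
is matrix multiplication. -/
def phiOperator : Matrix (Fin 8 × Fin 8) (Fin 8 × Fin 8) ℝ :=
  Matrix.of fun x y => Phi x.1 x.2 y.1 y.2

theorem phiOperator_eq :
    phiOperator =
      antisymmetrizer (Fin 8) ℝ
        - (Matrix.of lambdaSevenBasis)ᵀ * Matrix.of lambdaSevenBasis := by
  ext ⟨i, j⟩ ⟨k, l⟩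
  simp only [phiOperator, Matrix.of_apply, Phi, wedge4_eq_wedge2_mul_wedge2, Matrix.sub_apply,
    antisymmetrizer_apply, ← kd_eq_one_apply, kd_eq_sum i, kd_eq_sum j, Matrix.mul_apply,
    Matrix.transpose_apply, lambdaSevenBasis, Fin.sum_univ_seven, Fin.sum_univ_eight]
  simp only [Matrix.cons_val, Pi.add_apply, Pi.sub_apply, wedge2]
  ring

theorem phiOperator_sq :
    phiOperator ^ 2 = (6 : ℝ) • antisymmetrizer (Fin 8) ℝ - (4 : ℝ) • phiOperator := by
  have orthogonal :
      Matrix.of lambdaSevenBasis * (Matrix.of lambdaSevenBasis)ᵀ = (8 : ℝ) • 1 := by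
    ext m m'
    rw [Matrix.smul_apply, Matrix.one_apply, smul_eq_mul, mul_boole]
    exact lambdaSevenBasis_dotProduct m m'
  rw [phiOperator_eq, antisymmetrizer_sub_transpose_mul_self_sq
    (J := Matrix.of lambdaSevenBasis) lambdaSevenBasis_swap orthogonal]
  norm_num

theorem sum_Phi_mul_Phi (i j k l : Fin 8) :
    ∑ p, ∑ q, Phi i j p q * Phi p q k l =
      6 * (kd i k * kd j l - kd i l * kd j k) - 4 * Phi i j k l := by
  simpa [sq, Matrix.mul_apply, Fintype.sum_prod_type, phiOperator, antisymmetrizer_apply,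
    ← kd_eq_one_apply] using congrFun₂ phiOperator_sq (i, j) (k, l)

/-- `Ω_Φ(Φ) = -24 Φ`. -/
theorem spin7_omega_of_fundamental_form :
    ∀ i j k l : Fin 8,
      ((∑ p, ∑ q, Phi i j p q * Phi p q k l) + (∑ p, ∑ q, Phi i k p q * Phi p q l j)
        + (∑ p, ∑ q, Phi i l p q * Phi p q j k) + (∑ p, ∑ q, Phi j k p q * Phi p q i l)
        + (∑ p, ∑ q, Phi j l p q * Phi p q k i) + (∑ p, ∑ q, Phi k l p q * Phi p q i j))
      = -24 * Phi i j k l := by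
  intro i j k l
  have h_iklj : Phi i k l j = Phi i j k l := Phi_rotate_last_three i j k l
  have h_iljk : Phi i l j k = Phi i j k l := (Phi_rotate_last_three i l j k).symm
  have h_jkil : Phi j k i l = Phi i j k l := (Phi_swap_pairs i l j k).trans h_iljk
  have h_jlki : Phi j l k i = Phi i j k l := by
    rw [← Phi_swap_pairs, Phi_rotate_last_three k l i j, Phi_swap_pairs]
  have h_klij : Phi k l i j = Phi i j k l := Phi_swap_pairs i j k l
  simp only [sum_Phi_mul_Phi, h_iklj, h_iljk, h_jkil, h_jlki, h_klij]
  rw [kd_comm j i, kd_comm k i, kd_comm l i, kd_comm k j, kd_comm l j, kd_comm l k]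
  ring
end
end

section
/- A 4-form σ on ℝ^8 satisfies Ω_Φ(σ) = 4σ if and only if σ_{ijkl}Φ_{mjkl} = 0 for all i,m (sum over j,k,l); moreover this eigenspace Λ⁴₂₇ has dimension 27. -/
/-!
We work in ℝ⁸ with the standard basis `e₀, …, e₇`.  A `k`-form is a totally antisymmetric
map `(Fin 8)^k → ℝ`; repeated indices are summed over `Fin 8` and `kd` is the Kronecker
delta.  `Phi` is the fundamental 4-form of the standard `Spin(7)`-structure on ℝ⁸,
`Φ = -e₀₁₂₇ + e₀₂₃₆ - e₀₃₄₇ - e₀₅₆₇ + e₀₁₄₆ + e₀₂₄₅ - e₀₁₃₅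
     - e₃₄₅₆ - e₁₄₅₇ - e₁₂₅₆ - e₁₂₃₄ - e₂₃₅₇ - e₁₃₆₇ + e₂₄₆₇`.
-/

noncomputable section

/-- Totally antisymmetric 4-tensors on ℝ⁸ (4-forms). -/
def FourForm : Submodule ℝ (Fin 8 → Fin 8 → Fin 8 → Fin 8 → ℝ) where
  carrier :=
    {σ | ∀ i j k l, σ i j k l = -σ j i k l ∧ σ i j k l = -σ i k j l ∧ σ i j k l = -σ i j l k}
  zero_mem' := by intro i j k l; refine ⟨by simp, by simp, by simp⟩
  add_mem' := by
    intro a b ha hb i j k l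
    refine ⟨?_, ?_, ?_⟩
    · simp only [Pi.add_apply, (ha i j k l).1, (hb i j k l).1]; ring
    · simp only [Pi.add_apply, (ha i j k l).2.1, (hb i j k l).2.1]; ring
    · simp only [Pi.add_apply, (ha i j k l).2.2, (hb i j k l).2.2]; ring
  smul_mem' := by
    intro c a ha i j k l
    refine ⟨?_, ?_, ?_⟩
    · simp only [Pi.smul_apply, smul_eq_mul, (ha i j k l).1]; ring
    · simp only [Pi.smul_apply, smul_eq_mul, (ha i j k l).2.1]; ring
    · simp only [Pi.smul_apply, smul_eq_mul, (ha i j k l).2.2]; ring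

/-- The operator `Ω_Φ` on 4-tensors:
`(Ω_Φ(σ))_{ijkl} = σ_{ijpq}Φ_{pqkl} + σ_{ikpq}Φ_{pqlj} + σ_{ilpq}Φ_{pqjk}
                 + σ_{jkpq}Φ_{pqil} + σ_{jlpq}Φ_{pqki} + σ_{klpq}Φ_{pqij}`. -/
def OmegaOp : (Fin 8 → Fin 8 → Fin 8 → Fin 8 → ℝ) →ₗ[ℝ] (Fin 8 → Fin 8 → Fin 8 → Fin 8 → ℝ) where
  toFun σ := fun i j k l =>
    (∑ p, ∑ q, σ i j p q * Phi p q k l) + (∑ p, ∑ q, σ i k p q * Phi p q l j)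
    + (∑ p, ∑ q, σ i l p q * Phi p q j k) + (∑ p, ∑ q, σ j k p q * Phi p q i l)
    + (∑ p, ∑ q, σ j l p q * Phi p q k i) + (∑ p, ∑ q, σ k l p q * Phi p q i j)
  map_add' σ τ := by
    funext i j k l
    simp only [Pi.add_apply, add_mul, Finset.sum_add_distrib]
    ring
  map_smul' c σ := by
    funext i j k l
    simp only [Pi.smul_apply, smul_eq_mul, RingHom.id_apply, Finset.mul_sum, mul_assoc, mul_add]

/-!
Write `(C σ)_{im} = σ_{ijkl} Φ_{mjkl}`, and let `A ◇ Φ` be the derivation action of a matrix `A` on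
`Φ`. The contraction identity for `Φ_{ijkl} Φ_{abcl}` yields `(C σ) ◇ Φ = 24 σ - 6 Ω_Φ(σ)` for every
4-form `σ`, so `Ω_Φ(σ) = 4 σ` if and only if `(C σ) ◇ Φ = 0`. Since `A ↦ A ◇ Φ` is adjoint to `C` up
to a positive factor, this forces `|C σ|² = 0`.

For the dimension, `C` maps the 70-dimensional space of 4-forms onto the range of a projection of
`ℝ^{8×8}` of trace `43 = 1 + 35 + 7` (scalar matrices, traceless symmetric ones, and `Λ²₇`), which
leaves a kernel of dimension `70 - 43 = 27`.
-/

section AlternatingTensors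

variable {R ι : Type*} [CommRing R] {n : ℕ}

/-- Totally antisymmetric `n`-tensors, i.e. `n`-forms given by their components: a permutation of
the indices acts by its sign. -/
def alternatingTensors (R ι : Type*) [CommRing R] (n : ℕ) : Submodule R ((Fin n → ι) → R) where
  carrier := {f | ∀ (r : Fin n → ι) (π : Equiv.Perm (Fin n)), f (r ∘ π) = π.sign • f r}
  zero_mem' := by simp
  add_mem' hf hg r π := by simp [hf r π, hg r π]
  smul_mem' c f hf r π := by simp [hf r π, mul_smul_comm]

theorem mem_alternatingTensors_of_swap_succ {f : (Fin (n + 1) → ι) → R}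
    (hf : ∀ r (i : Fin n), f (r ∘ Equiv.swap i.castSucc i.succ) = -f r) :
    f ∈ alternatingTensors R ι (n + 1) := by
  intro r π
  have hπ : π ∈ Submonoid.closure
      (Set.range fun i : Fin n ↦ Equiv.swap i.castSucc i.succ) := by
    simp [Equiv.Perm.mclosure_swap_castSucc_succ]
  induction hπ using Submonoid.closure_induction generalizing r with
  | mem _ h =>
    obtain ⟨i, rfl⟩ := h
    simp [hf, Equiv.Perm.sign_swap i.castSucc_lt_succ.ne]
  | one => simp
  | mul π ρ _ _ hπ hρ =>
    rw [Equiv.Perm.coe_mul, ← Function.comp_assoc, hρ, hπ, map_mul, mul_comm, mul_smul]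

theorem eq_zero_of_forall_strictMono [IsAddTorsionFree R] [LinearOrder ι] {f : (Fin n → ι) → R}
    (hf : f ∈ alternatingTensors R ι n) (h : ∀ r, StrictMono r → f r = 0) : f = 0 := by
  funext r
  by_cases hr : Function.Injective r
  · have hmono : StrictMono (r ∘ Tuple.sort r) :=
      (Tuple.monotone_sort r).strictMono_of_injective (hr.comp (Tuple.sort r).injective)
    simpa [hf r, smul_eq_zero_iff_eq] using h _ hmono
  · obtain ⟨i, j, hij, hne⟩ := Function.not_injective_iff.mp hr
    have hswap : r ∘ Equiv.swap i j = r := by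
      rw [Equiv.comp_swap_eq_update, hij, Function.update_eq_self, ← hij, Function.update_eq_self]
    simpa [hswap, Equiv.Perm.sign_swap hne, self_eq_neg] using hf r (Equiv.swap i j)

theorem det_submatrix_one_of_strictMono [LinearOrder ι] {r s : Fin n → ι}
    (hr : StrictMono r) (hs : StrictMono s) :
    ((1 : Matrix ι ι R).submatrix r s).det = if r = s then 1 else 0 := by
  split_ifs with h
  · rw [h, Matrix.submatrix_one _ hs.injective, Matrix.det_one]
  · obtain ⟨i, hi⟩ : ∃ i, r i ∉ Set.range s := by
      by_contra! hsub
      refine h ((hr.range_inj hs).mp (Set.eq_of_subset_of_ncard_le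
        (Set.range_subset_iff.mpr hsub) ?_))
      simp [Set.ncard_range_of_injective, hr.injective, hs.injective]
    exact Matrix.det_eq_zero_of_row_eq_zero i fun j ↦
      Matrix.one_apply_ne fun hij ↦ hi ⟨j, hij.symm⟩

theorem det_submatrix_one_mem_alternatingTensors [DecidableEq ι] (r : Fin n → ι) :
    (fun s ↦ ((1 : Matrix ι ι R).submatrix r s).det) ∈ alternatingTensors R ι n := by
  intro s π
  simpa [Units.smul_def] using ((1 : Matrix ι ι R).submatrix r s).det_permute' π

theorem finrank_alternatingTensors [Nontrivial R] [IsAddTorsionFree R] [Fintype ι] [LinearOrder ι] :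
    Module.finrank R (alternatingTensors R ι n) = (Fintype.card ι).choose n := by
  -- An alternating tensor is determined by its components at increasing index tuples, and these
  -- are arbitrary: identity minors supply the dual basis.
  let restrict : alternatingTensors R ι n →ₗ[R] (Set.powersetCard ι n → R) :=
    LinearMap.funLeft R R (fun s ↦ ⇑(Set.powersetCard.ofFinEmbEquiv.symm s)) ∘ₗ
      (alternatingTensors R ι n).subtype
  have hinj : Function.Injective restrict := by
    refine (injective_iff_map_eq_zero restrict).mpr fun f hf ↦ Subtype.ext ?_
    refine eq_zero_of_forall_strictMono f.2 fun r hr ↦ ?_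
    simpa [restrict, LinearMap.funLeft_apply] using congrFun hf
      (Set.powersetCard.ofFinEmbEquiv (OrderEmbedding.ofStrictMono r hr))
  have hsurj : Function.Surjective restrict := by
    intro g
    refine ⟨∑ s, g s • ⟨_, det_submatrix_one_mem_alternatingTensors
      (Set.powersetCard.ofFinEmbEquiv.symm s)⟩, ?_⟩
    ext s
    simp [restrict, LinearMap.funLeft_apply, det_submatrix_one_of_strictMono,
      OrderEmbedding.strictMono]
  rw [(LinearEquiv.ofBijective restrict ⟨hinj, hsurj⟩).finrank_eq,
    Module.finrank_fintype_fun_eq_card,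
    ← Nat.card_eq_fintype_card, Set.powersetCard.card,
    Nat.card_eq_fintype_card]

end AlternatingTensors

section FourForms

/-- Components of a covariant `4`-tensor on `ℝ⁸`. -/
abbrev FourTensor : Type := Fin 8 → Fin 8 → Fin 8 → Fin 8 → ℝ

/-- `4`-tensors with their four indices collected in one tuple. -/
def uncurryFour : FourTensor ≃ₗ[ℝ] ((Fin 4 → Fin 8) → ℝ) where
  toFun σ r := σ (r 0) (r 1) (r 2) (r 3)
  invFun f i j k l := f ![i, j, k, l]
  map_add' _ _ := rfl
  map_smul' _ _ := rfl
  left_inv _ := rfl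
  right_inv f := funext fun _ ↦ congrArg f (List.ofFn_injective rfl)

theorem mem_fourForm_iff {σ : FourTensor} :
    σ ∈ FourForm ↔ uncurryFour σ ∈ alternatingTensors ℝ (Fin 8) 4 := by
  constructor
  · intro hσ
    refine mem_alternatingTensors_of_swap_succ fun r s ↦ ?_
    have hr := hσ (r 0) (r 1) (r 2) (r 3)
    rw [eq_comm, neg_eq_iff_eq_neg]
    fin_cases s
    exacts [hr.1, hr.2.1, hr.2.2]
  · intro hσ i j k l
    have hswap (s : Fin 3) : uncurryFour σ ![i, j, k, l] =
        -uncurryFour σ (![i, j, k, l] ∘ Equiv.swap s.castSucc s.succ) := by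
      simp [hσ _ (Equiv.swap s.castSucc s.succ), Equiv.Perm.sign_swap s.castSucc_lt_succ.ne]
    exact ⟨hswap 0, hswap 1, hswap 2⟩

theorem finrank_fourForm : Module.finrank ℝ FourForm = 70 := by
  have hmap : FourForm = (alternatingTensors ℝ (Fin 8) 4).map
      (uncurryFour.symm : ((Fin 4 → Fin 8) → ℝ) →ₗ[ℝ] FourTensor) := by
    ext σ
    rw [mem_fourForm_iff, Submodule.mem_map_equiv, LinearEquiv.symm_symm]
  rw [hmap, LinearEquiv.finrank_map_eq, finrank_alternatingTensors, Fintype.card_fin]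
  rfl

theorem fourForm_ext {σ τ : FourTensor} (hσ : σ ∈ FourForm)
    (hτ : τ ∈ FourForm) (h : ∀ i j k l, i < j → j < k → k < l → σ i j k l = τ i j k l) :
    σ = τ := by
  refine uncurryFour.injective (sub_eq_zero.mp (eq_zero_of_forall_strictMono
    (sub_mem (mem_fourForm_iff.mp hσ) (mem_fourForm_iff.mp hτ)) fun r hr ↦ sub_eq_zero.mpr ?_))
  exact h _ _ _ _ (hr (by decide)) (hr (by decide)) (hr (by decide))

theorem swap_pairs_of_mem_fourForm {φ : FourTensor} (hφ : φ ∈ FourForm)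
    (i j k l : Fin 8) : φ i j k l = φ k l i j := by
  rw [(hφ i j k l).2.1, (hφ i k j l).1, (hφ k i j l).2.2, (hφ k i l j).2.1, neg_neg, neg_neg]

theorem wedge4_eq_det_submatrix_one (a b c d i j k l : Fin 8) : wedge4 a b c d i j k l =
    ((1 : Matrix (Fin 8) (Fin 8) ℝ).submatrix ![a, b, c, d] ![i, j, k, l]).det := by
  refine congrArg Matrix.det (Matrix.ext fun m n ↦ ?_)
  fin_cases m <;> fin_cases n <;> rfl

theorem wedge4_mem_fourForm (a b c d : Fin 8) : wedge4 a b c d ∈ FourForm := by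
  have hdet : wedge4 a b c d = uncurryFour.symm
      fun s ↦ ((1 : Matrix (Fin 8) (Fin 8) ℝ).submatrix ![a, b, c, d] s).det := by
    funext i j k l
    exact wedge4_eq_det_submatrix_one a b c d i j k l
  rw [mem_fourForm_iff, hdet, LinearEquiv.apply_symm_apply]
  exact det_submatrix_one_mem_alternatingTensors _

theorem wedge4_eq_ite_of_lt {a b c d i j k l : Fin 8} (hab : a < b) (hbc : b < c) (hcd : c < d)
    (hij : i < j) (hjk : j < k) (hkl : k < l) :
    wedge4 a b c d i j k l = if ![a, b, c, d] = ![i, j, k, l] then 1 else 0 := by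
  rw [wedge4_eq_det_submatrix_one, det_submatrix_one_of_strictMono] <;>
    rw [Fin.strictMono_iff_lt_succ] <;> intro m <;> fin_cases m <;> assumption

theorem phi_mem_fourForm : Phi ∈ FourForm := by
  change -wedge4 0 1 2 7 + wedge4 0 2 3 6 - wedge4 0 3 4 7 - wedge4 0 5 6 7 + wedge4 0 1 4 6
    + wedge4 0 2 4 5 - wedge4 0 1 3 5 - wedge4 3 4 5 6 - wedge4 1 4 5 7 - wedge4 1 2 5 6
    - wedge4 1 2 3 4 - wedge4 2 3 5 7 - wedge4 1 3 6 7 + wedge4 2 4 6 7 ∈ FourForm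
  repeat' with_reducible first
    | exact wedge4_mem_fourForm _ _ _ _ | apply neg_mem | apply add_mem | apply sub_mem

end FourForms

section ContractionIdentity

/-- The sign of `j - i`, so that the product of these over all pairs of indices is the sign of the
permutation sorting them (and `0` if an index is repeated). -/
def pairSign (i j : Fin 8) : ℤ := if i < j then 1 else if j < i then -1 else 0

/-- The index set `{i, j, k, l}` as a bit mask, which the kernel compares in one step. -/
def indexMask (i j k l : Fin 8) : ℕ := 2 ^ i.val + 2 ^ j.val + 2 ^ k.val + 2 ^ l.val

/-- The components of `Phi` in a form that the kernel can evaluate: `Phi` itself is built from real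
determinants. -/
def phiInt (i j k l : Fin 8) : ℤ :=
  pairSign i j * pairSign i k * pairSign i l * pairSign j k * pairSign j l * pairSign k l *
    if indexMask i j k l ∈ [indexMask 0 2 3 6, indexMask 0 1 4 6, indexMask 0 2 4 5,
      indexMask 2 4 6 7] then 1
    else if indexMask i j k l ∈ [indexMask 0 1 2 7, indexMask 0 3 4 7, indexMask 0 5 6 7,
      indexMask 0 1 3 5, indexMask 3 4 5 6, indexMask 1 4 5 7, indexMask 1 2 5 6,
      indexMask 1 2 3 4, indexMask 2 3 5 7, indexMask 1 3 6 7] then -1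
    else 0

theorem pairSign_swap (i j : Fin 8) : pairSign i j = -pairSign j i := by
  unfold pairSign
  split_ifs <;> omega

theorem phiInt_mem_fourForm : (fun i j k l ↦ (phiInt i j k l : ℝ)) ∈ FourForm := by
  intro i j k l
  beta_reduce
  refine ⟨?_, ?_, ?_⟩ <;> norm_cast <;> unfold phiInt
  · rw [pairSign_swap i j, show indexMask i j k l = indexMask j i k l by unfold indexMask; ring]
    ring
  · rw [pairSign_swap j k, show indexMask i j k l = indexMask i k j l by unfold indexMask; ring]
    ring
  · rw [pairSign_swap k l, show indexMask i j k l = indexMask i j l k by unfold indexMask; ring]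
    ring

theorem phiInt_of_lt : ∀ i j k l : Fin 8, i < j → j < k → k < l → phiInt i j k l =
    -(if ![0, 1, 2, 7] = ![i, j, k, l] then 1 else 0)
    + (if ![0, 2, 3, 6] = ![i, j, k, l] then 1 else 0)
    - (if ![0, 3, 4, 7] = ![i, j, k, l] then 1 else 0)
    - (if ![0, 5, 6, 7] = ![i, j, k, l] then 1 else 0)
    + (if ![0, 1, 4, 6] = ![i, j, k, l] then 1 else 0)
    + (if ![0, 2, 4, 5] = ![i, j, k, l] then 1 else 0)
    - (if ![0, 1, 3, 5] = ![i, j, k, l] then 1 else 0)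
    - (if ![3, 4, 5, 6] = ![i, j, k, l] then 1 else 0)
    - (if ![1, 4, 5, 7] = ![i, j, k, l] then 1 else 0)
    - (if ![1, 2, 5, 6] = ![i, j, k, l] then 1 else 0)
    - (if ![1, 2, 3, 4] = ![i, j, k, l] then 1 else 0)
    - (if ![2, 3, 5, 7] = ![i, j, k, l] then 1 else 0)
    - (if ![1, 3, 6, 7] = ![i, j, k, l] then 1 else 0)
    + (if ![2, 4, 6, 7] = ![i, j, k, l] then 1 else 0) := by
  decide +kernel

theorem phi_eq_phiInt : Phi = fun i j k l ↦ (phiInt i j k l : ℝ) := by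
  refine fourForm_ext phi_mem_fourForm phiInt_mem_fourForm fun i j k l hij hjk hkl ↦ ?_
  rw [phiInt_of_lt i j k l hij hjk hkl, Phi]
  simp [wedge4_eq_ite_of_lt, hij, hjk, hkl]

/-- The difference of the two sides of the contraction identity for `φ_{ijkl} φ_{abcl}`. The ring is
arbitrary so that the identity for `Phi` can be evaluated over `ℤ`. -/
def contractionDefect {R : Type*} [CommRing R] (φ : Fin 8 → Fin 8 → Fin 8 → Fin 8 → R)
    (i j k a b c : Fin 8) : R :=
  let δ : Matrix (Fin 8) (Fin 8) R := 1
  (∑ l, φ i j k l * φ a b c l) -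
    (δ i a * δ j b * δ k c + δ i b * δ j c * δ k a + δ i c * δ j a * δ k b
      - δ i a * δ j c * δ k b - δ i b * δ j a * δ k c - δ i c * δ j b * δ k a
      - δ i a * φ j k b c - δ i b * φ j k c a - δ i c * φ j k a b
      - δ j a * φ k i b c - δ j b * φ k i c a - δ j c * φ k i a b
      - δ k a * φ i j b c - δ k b * φ i j c a - δ k c * φ i j a b)

set_option maxRecDepth 4000 in
theorem contractionDefect_phiInt_of_lt : ∀ i j, i < j → ∀ k, j < k → ∀ a b, a < b → ∀ c, b < c →
    contractionDefect phiInt i j k a b c = 0 := by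
  decide +kernel

theorem contractionDefect_intCast (φ : Fin 8 → Fin 8 → Fin 8 → Fin 8 → ℤ)
    (i j k a b c : Fin 8) :
    contractionDefect (fun i j k l ↦ (φ i j k l : ℝ)) i j k a b c =
      contractionDefect φ i j k a b c := by
  simp [contractionDefect, Matrix.one_apply]

variable {φ : FourTensor}

theorem contractionDefect_swap_left (hφ : φ ∈ FourForm) (i j k a b c : Fin 8) :
    contractionDefect φ j i k a b c = -contractionDefect φ i j k a b c := by
  have hswap (p q m n) : φ p q m n = -φ q p m n := (hφ p q m n).1
  simp only [contractionDefect, hswap j i, hswap i k, hswap k j, neg_mul, Finset.sum_neg_distrib]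
  ring

theorem contractionDefect_swap_right (hφ : φ ∈ FourForm) (i j k a b c : Fin 8) :
    contractionDefect φ i k j a b c = -contractionDefect φ i j k a b c := by
  have hswap (p q m n) : φ p q m n = -φ q p m n := (hφ p q m n).1
  have hmid (l) : φ i k j l = -φ i j k l := (hφ i k j l).2.1
  simp only [contractionDefect, hmid, hswap j i, hswap i k, hswap k j, neg_mul,
    Finset.sum_neg_distrib]
  ring

theorem contractionDefect_mem_alternatingTensors (hφ : φ ∈ FourForm) (a b c : Fin 8) :
    (fun r ↦ contractionDefect φ (r 0) (r 1) (r 2) a b c) ∈ alternatingTensors ℝ (Fin 8) 3 := by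
  refine mem_alternatingTensors_of_swap_succ fun r s ↦ ?_
  fin_cases s
  · exact contractionDefect_swap_left hφ ..
  · exact contractionDefect_swap_right hφ ..

theorem contractionDefect_comm (hφ : φ ∈ FourForm) (i j k a b c : Fin 8) :
    contractionDefect φ i j k a b c = contractionDefect φ a b c i j k := by
  have hδ (p q : Fin 8) : (1 : Matrix (Fin 8) (Fin 8) ℝ) p q = (1 : Matrix _ _ ℝ) q p := by
    simp [Matrix.one_apply, eq_comm]
  have hsum : ∑ l, φ i j k l * φ a b c l = ∑ l, φ a b c l * φ i j k l := by simp only [mul_comm]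
  rw [contractionDefect, contractionDefect, hsum]
  simp only [hδ a, hδ b, hδ c, swap_pairs_of_mem_fourForm hφ b c,
    swap_pairs_of_mem_fourForm hφ c a, swap_pairs_of_mem_fourForm hφ a b]
  ring

theorem contractionDefect_phi (i j k a b c : Fin 8) : contractionDefect Phi i j k a b c = 0 := by
  have hΦ := phi_mem_fourForm
  have hsorted (a b c) (h : ∀ i j k, i < j → j < k → contractionDefect Phi i j k a b c = 0)
      (i j k) : contractionDefect Phi i j k a b c = 0 :=
    congrFun (eq_zero_of_forall_strictMono (contractionDefect_mem_alternatingTensors hΦ a b c)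
      fun r hr ↦ h _ _ _ (hr (by decide)) (hr (by decide))) ![i, j, k]
  refine hsorted a b c (fun i j k hij hjk ↦ ?_) i j k
  rw [contractionDefect_comm hΦ]
  refine hsorted i j k (fun a b c hab hbc ↦ ?_) a b c
  rw [phi_eq_phiInt, contractionDefect_intCast,
    contractionDefect_phiInt_of_lt a b hab c hbc i j hij k hjk, Int.cast_zero]

theorem sum_phi_mul_phi (i j k a b c : Fin 8) : ∑ l, Phi i j k l * Phi a b c l =
    kd i a * kd j b * kd k c + kd i b * kd j c * kd k a + kd i c * kd j a * kd k b
      - kd i a * kd j c * kd k b - kd i b * kd j a * kd k c - kd i c * kd j b * kd k a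
      - kd i a * Phi j k b c - kd i b * Phi j k c a - kd i c * Phi j k a b
      - kd j a * Phi k i b c - kd j b * Phi k i c a - kd j c * Phi k i a b
      - kd k a * Phi i j b c - kd k b * Phi i j c a - kd k c * Phi i j a b :=
  sub_eq_zero.mp (contractionDefect_phi i j k a b c)

theorem sum_sum_phi_mul_phi (i j a b : Fin 8) : ∑ k, ∑ l, Phi i j k l * Phi a b k l =
    6 * kd i a * kd j b - 6 * kd i b * kd j a - 4 * Phi i j a b := by
  have hΦ := phi_mem_fourForm
  have h₂₄ (p q k) : Phi p k q k = 0 := by linarith [(hΦ p k q k).2.1, (hΦ p q k k).2.2]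
  have h₂₃ (p q k) : Phi p k k q = 0 := by linarith [(hΦ p k k q).2.1]
  have h₁₄ (p q k) : Phi k p q k = 0 := by linarith [(hΦ k p q k).1, h₂₄ p q k]
  have h₁₃ (p q k) : Phi k p k q = 0 := by linarith [(hΦ k p k q).1, h₂₃ p q k]
  simp_rw [sum_phi_mul_phi, h₂₄, h₂₃, h₁₄, h₁₃]
  simp only [kd, mul_ite, mul_one, mul_zero, ↓reduceIte, sub_zero, ite_mul, one_mul, zero_mul,
    Finset.sum_sub_distrib, Finset.sum_add_distrib, Finset.sum_ite_irrel, Finset.sum_const,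
    Finset.card_univ, Fintype.card_fin, nsmul_eq_mul, Nat.cast_ofNat, Finset.sum_ite_eq',
    Finset.mem_univ, Finset.sum_ite_eq]
  rw [(hΦ j i a b).1, (hΦ i j b a).2.2]
  split_ifs <;> ring

theorem sum_sum_sum_phi_mul_phi (i a : Fin 8) : ∑ j, ∑ k, ∑ l, Phi i j k l * Phi a j k l =
    42 * kd i a := by
  have hΦ := phi_mem_fourForm
  have hzero (j) : Phi i j a j = 0 := by linarith [(hΦ i j a j).2.1, (hΦ i a j j).2.2]
  simp_rw [sum_sum_phi_mul_phi]
  simp only [kd, mul_ite, mul_one, mul_zero, ↓reduceIte, hzero, sub_zero, Finset.sum_sub_distrib,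
    Finset.sum_ite_irrel, Finset.sum_const, Finset.card_univ, Fintype.card_fin, nsmul_eq_mul,
    Nat.cast_ofNat, Finset.sum_ite_eq', Finset.mem_univ]
  split_ifs <;> ring

end ContractionIdentity

/-- The contraction `σ_{ijkl} φ_{mjkl}` of a `4`-tensor `σ` with `φ`. -/
def contract (φ : FourTensor) : FourTensor →ₗ[ℝ] Matrix (Fin 8) (Fin 8) ℝ where
  toFun σ := .of fun i m ↦ ∑ j, ∑ k, ∑ l, σ i j k l * φ m j k l
  map_add' σ τ := by ext; simp [add_mul, Finset.sum_add_distrib]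
  map_smul' c σ := by ext; simp [Finset.mul_sum, mul_assoc]

theorem contract_apply (φ σ : FourTensor) (i m : Fin 8) :
    contract φ σ i m = ∑ j, ∑ k, ∑ l, σ i j k l * φ m j k l := rfl

/-- The derivation action `A ◇ φ` of a matrix on a `4`-tensor: the sum of the tensors obtained by
applying `A` to one index of `φ`. -/
def diamond (φ : FourTensor) : Matrix (Fin 8) (Fin 8) ℝ →ₗ[ℝ] FourTensor where
  toFun A i j k l := (∑ p, A i p * φ p j k l) + (∑ p, A j p * φ i p k l)
    + (∑ p, A k p * φ i j p l) + ∑ p, A l p * φ i j k p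
  map_add' A B := by
    ext
    simp only [Matrix.add_apply, add_mul, Finset.sum_add_distrib, Pi.add_apply]
    ring
  map_smul' c A := by
    ext
    simp [mul_assoc, ← Finset.mul_sum, mul_add]

theorem diamond_apply (φ : FourTensor) (A : Matrix (Fin 8) (Fin 8) ℝ) (i j k l : Fin 8) :
    diamond φ A i j k l = (∑ p, A i p * φ p j k l) + (∑ p, A j p * φ i p k l)
      + (∑ p, A k p * φ i j p l) + ∑ p, A l p * φ i j k p := rfl

theorem diamond_mem_fourForm {φ : FourTensor} (hφ : φ ∈ FourForm)
    (A : Matrix (Fin 8) (Fin 8) ℝ) : diamond φ A ∈ FourForm := by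
  intro i j k l
  simp only [diamond_apply]
  refine ⟨?_, ?_, ?_⟩
  · simp only [fun p ↦ (hφ p j k l).1, fun p ↦ (hφ i p k l).1, fun p ↦ (hφ i j p l).1,
      fun p ↦ (hφ i j k p).1, mul_neg, Finset.sum_neg_distrib]
    ring
  · simp only [fun p ↦ (hφ p j k l).2.1, fun p ↦ (hφ i p k l).2.1, fun p ↦ (hφ i j p l).2.1,
      fun p ↦ (hφ i j k p).2.1, mul_neg, Finset.sum_neg_distrib]
    ring
  · simp only [fun p ↦ (hφ p j k l).2.2, fun p ↦ (hφ i p k l).2.2, fun p ↦ (hφ i j p l).2.2,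
      fun p ↦ (hφ i j k p).2.2, mul_neg, Finset.sum_neg_distrib]
    ring

theorem sum_comm_cycle₃ {α β γ δ M : Type*} [Fintype α] [Fintype β] [Fintype γ] [Fintype δ]
    [AddCommMonoid M] (f : α → β → γ → δ → M) :
    ∑ p, ∑ a, ∑ b, ∑ c, f p a b c = ∑ a, ∑ b, ∑ c, ∑ p, f p a b c :=
  Finset.sum_comm.trans (Finset.sum_congr rfl fun _ _ ↦ Finset.sum_comm_cycle.symm)

theorem contract_mul_phi {σ : FourTensor} (hσ : σ ∈ FourForm) (i j k l : Fin 8) :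
    ∑ p, contract Phi σ i p * Phi p j k l = 6 * σ i j k l
      - 3 * ((∑ p, ∑ q, σ i j p q * Phi p q k l) + (∑ p, ∑ q, σ i k p q * Phi p q l j)
        + ∑ p, ∑ q, σ i l p q * Phi p q j k) := by
  have hΦ := phi_mem_fourForm
  have hcontr (a b c : Fin 8) : ∑ p, Phi p a b c * Phi p j k l =
      ∑ p, Phi j k l p * Phi a b c p := by
    refine Finset.sum_congr rfl fun p _ ↦ ?_
    rw [(hΦ p a b c).1, (hΦ a p b c).2.1, (hΦ a b p c).2.2, (hΦ p j k l).1, (hΦ j p k l).2.1,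
      (hΦ j k p l).2.2]
    ring
  have hfirst (m a b : Fin 8) : ∑ p, ∑ q, σ i m p q * Phi a b p q =
      ∑ p, ∑ q, σ i m p q * Phi p q a b := by
    simp only [swap_pairs_of_mem_fourForm hΦ a b]
  have hsecond (m a b : Fin 8) : ∑ p, ∑ q, σ i p m q * Phi a b q p =
      ∑ p, ∑ q, σ i m p q * Phi p q a b := by
    rw [← hfirst]
    refine Finset.sum_congr rfl fun p _ ↦ Finset.sum_congr rfl fun q _ ↦ ?_
    rw [(hσ i p m q).2.1, (hΦ a b q p).2.2, neg_mul_neg]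
  have hthird (m a b : Fin 8) : ∑ p, ∑ q, σ i p q m * Phi a b p q =
      ∑ p, ∑ q, σ i m p q * Phi p q a b := by
    rw [← hsecond]
    refine Finset.sum_congr rfl fun p _ ↦ Finset.sum_congr rfl fun q _ ↦ ?_
    rw [(hσ i p q m).2.2, (hΦ a b p q).2.2, neg_mul_neg]
  calc ∑ p, contract Phi σ i p * Phi p j k l
      = ∑ a, ∑ b, ∑ c, σ i a b c * ∑ p, Phi p a b c * Phi p j k l := by
        simp only [contract_apply, Finset.sum_mul, Finset.mul_sum, mul_assoc]
        exact sum_comm_cycle₃ _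
    _ = _ := by
        simp only [hcontr, sum_phi_mul_phi, kd, mul_ite, mul_one, mul_zero, ite_mul, one_mul,
          zero_mul, mul_sub, mul_add, Finset.sum_sub_distrib, Finset.sum_add_distrib,
          Finset.sum_ite_eq, Finset.mem_univ, ↓reduceIte, Finset.sum_ite_irrel,
          Finset.sum_const_zero, hfirst, hsecond, hthird]
        rw [(hσ i l j k).2.1, (hσ i j l k).2.2, (hσ i k l j).2.2, (hσ i k j l).2.1,
          (hσ i l k j).2.1, (hσ i k l j).2.2, (hσ i k j l).2.1]
        ring

theorem diamond_contract {σ : FourTensor} (hσ : σ ∈ FourForm) :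
    diamond Phi (contract Phi σ) = (24 : ℝ) • σ - (6 : ℝ) • OmegaOp σ := by
  have hΦ := phi_mem_fourForm
  let E (i j k l : Fin 8) : ℝ := ∑ p, ∑ q, σ i j p q * Phi p q k l
  have hleft (i j k l) : E i j k l = -E j i k l := by
    simp only [E, fun p q ↦ (hσ i j p q).1, neg_mul, Finset.sum_neg_distrib]
  have hright (i j k l) : E i j k l = -E i j l k := by
    simp only [E, fun p q ↦ (hΦ p q k l).2.2, mul_neg, Finset.sum_neg_distrib]
  have hC (i j k l) : ∑ p, contract Phi σ i p * Phi p j k l =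
      6 * σ i j k l - 3 * (E i j k l + E i k l j + E i l j k) := contract_mul_phi hσ i j k l
  funext i j k l
  have hsecond : ∑ p, contract Phi σ j p * Phi i p k l =
      -∑ p, contract Phi σ j p * Phi p i k l := by
    simp only [fun p ↦ (hΦ i p k l).1, mul_neg, Finset.sum_neg_distrib]
  have hthird : ∑ p, contract Phi σ k p * Phi i j p l =
      ∑ p, contract Phi σ k p * Phi p i j l := by
    simp only [fun p ↦ (hΦ i j p l).2.1, fun p ↦ (hΦ i p j l).1, neg_neg]
  have hfourth : ∑ p, contract Phi σ l p * Phi i j k p =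
      -∑ p, contract Phi σ l p * Phi p i j k := by
    simp only [fun p ↦ (hΦ i j k p).2.2, fun p ↦ (hΦ i j p k).2.1, fun p ↦ (hΦ i p j k).1,
      mul_neg, Finset.sum_neg_distrib, neg_neg]
  calc diamond Phi (contract Phi σ) i j k l
      = 24 * σ i j k l - 6 * (E i j k l + E i k l j + E i l j k + E j k i l + E j l k i
          + E k l i j) := by
        rw [diamond_apply, hsecond, hthird, hfourth, hC, hC, hC, hC]
        rw [(hσ j i k l).1, (hσ k i j l).1, (hσ i k j l).2.1, (hσ l i j k).1, (hσ i l j k).2.1,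
          (hσ i j l k).2.2, hleft j i k l, hleft k i j l, hright i k j l, hleft k j l i,
          hright j k l i, hright j l i k, hleft l i j k, hleft l j k i, hleft l k i j]
        ring
    _ = ((24 : ℝ) • σ - (6 : ℝ) • OmegaOp σ) i j k l := rfl

theorem contract_diamond {φ ψ : FourTensor} (hφ : φ ∈ FourForm) (hψ : ψ ∈ FourForm)
    (A : Matrix (Fin 8) (Fin 8) ℝ) (i m : Fin 8) :
    contract ψ (diamond φ A) i m = (∑ p, A i p * ∑ j, ∑ k, ∑ l, φ p j k l * ψ m j k l)
      + 3 * ∑ j, ∑ p, A j p * ∑ k, ∑ l, φ i p k l * ψ m j k l := by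
  have hfirst : ∑ j, ∑ k, ∑ l, ∑ p, A i p * φ p j k l * ψ m j k l =
      ∑ p, A i p * ∑ j, ∑ k, ∑ l, φ p j k l * ψ m j k l := by
    simp only [Finset.mul_sum, mul_assoc]
    exact (sum_comm_cycle₃ _).symm
  have hsecond : ∑ j, ∑ k, ∑ l, ∑ p, A j p * φ i p k l * ψ m j k l =
      ∑ j, ∑ p, A j p * ∑ k, ∑ l, φ i p k l * ψ m j k l := by
    refine Finset.sum_congr rfl fun j _ ↦ ?_
    simp only [Finset.mul_sum, mul_assoc]
    exact Finset.sum_comm_cycle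
  have hthird : ∑ j, ∑ k, ∑ l, ∑ p, A k p * φ i j p l * ψ m j k l =
      ∑ j, ∑ k, ∑ l, ∑ p, A j p * φ i p k l * ψ m j k l := by
    rw [Finset.sum_comm]
    refine Finset.sum_congr rfl fun j _ ↦ Finset.sum_congr rfl fun k _ ↦
      Finset.sum_congr rfl fun l _ ↦ Finset.sum_congr rfl fun p _ ↦ ?_
    rw [(hφ i k p l).2.1, (hψ m k j l).2.1]
    ring
  have hfourth : ∑ j, ∑ k, ∑ l, ∑ p, A l p * φ i j k p * ψ m j k l =
      ∑ j, ∑ k, ∑ l, ∑ p, A k p * φ i j p l * ψ m j k l := by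
    refine Finset.sum_congr rfl fun j _ ↦ ?_
    rw [Finset.sum_comm]
    refine Finset.sum_congr rfl fun k _ ↦ Finset.sum_congr rfl fun l _ ↦
      Finset.sum_congr rfl fun p _ ↦ ?_
    rw [(hφ i j l p).2.2, (hψ m j l k).2.2]
    ring
  simp only [contract_apply, diamond_apply, add_mul, Finset.sum_add_distrib, Finset.sum_mul]
  rw [hfourth, hthird, hfirst, hsecond]
  ring

theorem trace_contract_diamond {φ σ : FourTensor} (hφ : φ ∈ FourForm) (hσ : σ ∈ FourForm)
    (A : Matrix (Fin 8) (Fin 8) ℝ) :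
    (contract σ (diamond φ A)).trace = 4 * (A * (contract φ σ).transpose).trace := by
  have hfirst (i : Fin 8) : ∑ p, A i p * ∑ j, ∑ k, ∑ l, φ p j k l * σ i j k l =
      ∑ p, A i p * contract φ σ i p := by
    simp only [contract_apply, mul_comm (φ _ _ _ _)]
  have hsecond : ∑ i, ∑ j, ∑ p, A j p * ∑ k, ∑ l, φ i p k l * σ i j k l =
      ∑ j, ∑ p, A j p * contract φ σ j p := by
    refine Finset.sum_comm_cycle.symm.trans
      (Finset.sum_congr rfl fun j _ ↦ Finset.sum_congr rfl fun p _ ↦ ?_)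
    rw [← Finset.mul_sum, contract_apply]
    refine congrArg (A j p * ·) (Finset.sum_congr rfl fun i _ ↦ Finset.sum_congr rfl fun k _ ↦
      Finset.sum_congr rfl fun l _ ↦ ?_)
    rw [(hφ i p k l).1, (hσ i j k l).1]
    ring
  simp only [Matrix.trace, Matrix.diag_apply, contract_diamond hφ hσ, Matrix.mul_apply,
    Matrix.transpose_apply, Finset.sum_add_distrib, ← Finset.mul_sum, hfirst, hsecond]
  ring

theorem contract_eq_zero_of_diamond_contract_eq_zero {φ σ : FourTensor} (hφ : φ ∈ FourForm)
    (hσ : σ ∈ FourForm) (h : diamond φ (contract φ σ) = 0) : contract φ σ = 0 := by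
  have htrace := trace_contract_diamond hφ hσ (contract φ σ)
  rw [h, map_zero, Matrix.trace_zero, zero_eq_mul, or_iff_right four_ne_zero,
    ← Matrix.conjTranspose_eq_transpose_of_trivial] at htrace
  exact Matrix.trace_mul_conjTranspose_self_eq_zero_iff.mp htrace

theorem omegaOp_eq_four_smul_iff {σ : FourTensor} (hσ : σ ∈ FourForm) :
    OmegaOp σ = (4 : ℝ) • σ ↔ contract Phi σ = 0 := by
  have hdiamond := diamond_contract hσ
  constructor
  · intro hΩ
    refine contract_eq_zero_of_diamond_contract_eq_zero phi_mem_fourForm hσ ?_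
    rw [hdiamond, hΩ]
    module
  · intro hC
    rw [hC, map_zero] at hdiamond
    linear_combination (norm := module) (1 / 6 : ℝ) • hdiamond

/-- The action `φ_{imjp} A_{jp}` of a `4`-tensor `φ` on matrices. -/
def pairContract (φ : FourTensor) : Matrix (Fin 8) (Fin 8) ℝ →ₗ[ℝ] Matrix (Fin 8) (Fin 8) ℝ where
  toFun A := .of fun i m ↦ ∑ j, ∑ p, φ i m j p * A j p
  map_add' A B := by ext; simp [mul_add, Finset.sum_add_distrib]
  map_smul' c A := by ext; simp [Finset.mul_sum, mul_left_comm]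

theorem pairContract_apply (φ : FourTensor) (A : Matrix (Fin 8) (Fin 8) ℝ) (i m : Fin 8) :
    pairContract φ A i m = ∑ j, ∑ p, φ i m j p * A j p := rfl

theorem pairContract_transpose {φ : FourTensor} (hφ : φ ∈ FourForm)
    (A : Matrix (Fin 8) (Fin 8) ℝ) : pairContract φ A.transpose = -pairContract φ A := by
  ext i m
  rw [pairContract_apply, Finset.sum_comm]
  simp only [Matrix.transpose_apply, Matrix.neg_apply, pairContract_apply,
    ← Finset.sum_neg_distrib]
  refine Finset.sum_congr rfl fun j _ ↦ Finset.sum_congr rfl fun p _ ↦ ?_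
  rw [(hφ i m p j).2.2, neg_mul]

theorem pairContract_one {φ : FourTensor} (hφ : φ ∈ FourForm) : pairContract φ 1 = 0 := by
  have hneg := pairContract_transpose hφ 1
  rw [Matrix.transpose_one] at hneg
  ext i m
  exact self_eq_neg.mp (congrFun₂ hneg i m)

theorem contract_phi_diamond_phi (A : Matrix (Fin 8) (Fin 8) ℝ) :
    contract Phi (diamond Phi A) =
      (24 : ℝ) • A + (18 * A.trace) • (1 : Matrix (Fin 8) (Fin 8) ℝ)
        - (12 : ℝ) • pairContract Phi A := by
  have hΦ := phi_mem_fourForm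
  ext i m
  have hpair : ∑ j, ∑ p, A j p * Phi i p m j = pairContract Phi A i m := by
    rw [pairContract_apply]
    refine Finset.sum_congr rfl fun j _ ↦ Finset.sum_congr rfl fun p _ ↦ ?_
    rw [(hΦ i p m j).2.1, (hΦ i m p j).2.2, neg_neg, mul_comm]
  have hinner (j p : Fin 8) : A j p * (6 * kd i m * kd p j - 6 * kd i j * kd p m
      - 4 * Phi i p m j) = 6 * (kd i m * (A j p * kd p j)) - 6 * (kd i j * (A j p * kd p m))
        - 4 * (A j p * Phi i p m j) := by ring
  calc contract Phi (diamond Phi A) i m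
      = 42 * A i m + 3 * (6 * (kd i m * A.trace) - 6 * A i m
          - 4 * ∑ j, ∑ p, A j p * Phi i p m j) := by
        rw [contract_diamond hΦ hΦ]
        simp_rw [sum_sum_sum_phi_mul_phi, sum_sum_phi_mul_phi, hinner, Finset.sum_sub_distrib,
          ← Finset.mul_sum]
        simp [kd, Matrix.trace, mul_comm]
    _ = _ := by
        rw [hpair]
        simp only [kd, Matrix.sub_apply, Matrix.add_apply, Matrix.smul_apply, Matrix.one_apply,
          smul_eq_mul]
        ring

theorem pairContract_contract {σ : FourTensor} (hσ : σ ∈ FourForm) :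
    pairContract Phi (contract Phi σ) =
      (3 : ℝ) • ((contract Phi σ).transpose - contract Phi σ) := by
  have hΦ := phi_mem_fourForm
  have hzero (j k l : Fin 8) : σ j j k l = 0 := self_eq_neg.mp (hσ j j k l).1
  ext i m
  have hleft : ∑ j, ∑ p, ∑ q, σ j i p q * Phi p q m j = -contract Phi σ i m := by
    simp only [contract_apply, ← Finset.sum_neg_distrib]
    refine Finset.sum_congr rfl fun j _ ↦ Finset.sum_congr rfl fun p _ ↦
      Finset.sum_congr rfl fun q _ ↦ ?_
    rw [(hσ j i p q).1, swap_pairs_of_mem_fourForm hΦ p q, neg_mul]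
  have hright : ∑ j, ∑ p, ∑ q, σ j m p q * Phi p q j i = contract Phi σ m i := by
    rw [contract_apply]
    refine Finset.sum_congr rfl fun j _ ↦ Finset.sum_congr rfl fun p _ ↦
      Finset.sum_congr rfl fun q _ ↦ ?_
    rw [(hσ j m p q).1, swap_pairs_of_mem_fourForm hΦ p q, (hΦ j i p q).1, neg_mul_neg]
  calc pairContract Phi (contract Phi σ) i m
      = -∑ j, ∑ p, contract Phi σ j p * Phi p j i m := by
        simp only [pairContract_apply, ← Finset.sum_neg_distrib]
        refine Finset.sum_congr rfl fun j _ ↦ Finset.sum_congr rfl fun p _ ↦ ?_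
        rw [swap_pairs_of_mem_fourForm hΦ i m, (hΦ j p i m).1]
        ring
    _ = 3 * (∑ j, ∑ p, ∑ q, σ j i p q * Phi p q m j)
        + 3 * ∑ j, ∑ p, ∑ q, σ j m p q * Phi p q j i := by
        simp only [contract_mul_phi hσ, hzero, zero_mul, Finset.sum_const_zero,
          Finset.sum_sub_distrib, Finset.sum_add_distrib, ← Finset.mul_sum]
        ring
    _ = _ := by
        rw [hleft, hright, Matrix.smul_apply, Matrix.sub_apply, Matrix.transpose_apply, smul_eq_mul]
        ring

/-- The projection onto the matrices of the form `σ_{ijkl} Φ_{mjkl}` for a `4`-form `σ`: the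
identity on symmetric matrices, and on antisymmetric ones the projection onto `Λ²₇`, the
`-6`-eigenspace of `pairContract Phi`, along its `2`-eigenspace `Λ²₂₁`. -/
def contractProj : Module.End ℝ (Matrix (Fin 8) (Fin 8) ℝ) :=
  (5 / 8 : ℝ) • .id + (3 / 8 : ℝ) • (Matrix.transposeLinearEquiv (Fin 8) (Fin 8) ℝ ℝ).toLinearMap
    - (1 / 8 : ℝ) • pairContract Phi

theorem contractProj_apply (A : Matrix (Fin 8) (Fin 8) ℝ) : contractProj A =
    (5 / 8 : ℝ) • A + (3 / 8 : ℝ) • A.transpose - (1 / 8 : ℝ) • pairContract Phi A := rfl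

theorem contractProj_contract {σ : FourTensor} (hσ : σ ∈ FourForm) :
    contractProj (contract Phi σ) = contract Phi σ := by
  rw [contractProj_apply, pairContract_contract hσ]
  module

-- On `ℝ·1`, the traceless symmetric matrices, `Λ²₇` and `Λ²₂₁`, the map
-- `contract Phi ∘ diamond Phi` is multiplication by `168`, `24`, `96` and `0`; the matrix below
-- divides by the nonzero values.
theorem contractProj_eq_contract_diamond (A : Matrix (Fin 8) (Fin 8) ℝ) :
    contractProj A = contract Phi (diamond Phi
      ((5 / 192 : ℝ) • A + (1 / 64 : ℝ) • A.transpose - (A.trace / 224) • 1)) := by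
  have hΦ := phi_mem_fourForm
  have htrace : (1 : Matrix (Fin 8) (Fin 8) ℝ).trace = 8 := by simp
  simp only [contractProj_apply, contract_phi_diamond_phi, map_add, map_sub, map_smul,
    pairContract_transpose hΦ, pairContract_one hΦ, Matrix.trace_transpose, htrace]
  module

theorem isProj_contractProj : LinearMap.IsProj (FourForm.map (contract Phi)) contractProj where
  map_mem A := contractProj_eq_contract_diamond A ▸
    Submodule.mem_map_of_mem (diamond_mem_fourForm phi_mem_fourForm _)
  map_id := by
    rintro _ ⟨σ, hσ, rfl⟩
    exact contractProj_contract hσ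

theorem trace_end_matrix_eq_sum {R m n : Type*} [CommRing R] [Fintype m] [Fintype n]
    [DecidableEq m] [DecidableEq n] (f : Module.End R (Matrix m n R)) :
    LinearMap.trace R (Matrix m n R) f = ∑ i, ∑ j, f (Matrix.single i j 1) i j := by
  rw [LinearMap.trace_eq_matrix_trace R (Matrix.stdBasis R m n), Matrix.trace,
    Fintype.sum_prod_type]
  refine Finset.sum_congr rfl fun i _ ↦ Finset.sum_congr rfl fun j _ ↦ ?_
  rw [Matrix.diag_apply, LinearMap.toMatrix_apply, Matrix.stdBasis_eq_single]
  rfl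

theorem trace_contractProj : LinearMap.trace ℝ _ contractProj = 43 := by
  have hΦ := phi_mem_fourForm
  have hzero (i j : Fin 8) : Phi i j i j = 0 := by
    linarith [(hΦ i j i j).2.1, self_eq_neg.mp (hΦ i i j j).1]
  rw [trace_end_matrix_eq_sum]
  have hentry (i j : Fin 8) :
      contractProj (Matrix.single i j 1) i j = 5 / 8 + 3 / 8 * kd i j := by
    simp [contractProj_apply, pairContract_apply, Matrix.single_apply, ite_and, hzero, kd, eq_comm]
  have hsum : ∑ i, ∑ j, kd i j = 8 := by simp [kd]
  simp only [hentry, Finset.sum_add_distrib, ← Finset.mul_sum, hsum, Finset.sum_const,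
    Finset.card_univ, Fintype.card_fin]
  norm_num

theorem finrank_map_contract : Module.finrank ℝ (FourForm.map (contract Phi)) = 43 := by
  exact_mod_cast (isProj_contractProj.trace).symm.trans trace_contractProj

theorem finrank_map_add_finrank_inf_ker {K V W : Type*} [DivisionRing K] [AddCommGroup V]
    [Module K V] [FiniteDimensional K V] [AddCommGroup W] [Module K W] (f : V →ₗ[K] W)
    (p : Submodule K V) : Module.finrank K (p.map f) +
      Module.finrank K (p ⊓ LinearMap.ker f : Submodule K V) = Module.finrank K p := by
  rw [← (f.domRestrict p).finrank_range_add_finrank_ker, LinearMap.range_domRestrict,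
    LinearMap.ker_domRestrict, ← Submodule.map_comap_subtype, Submodule.finrank_map_subtype_eq]

theorem fourForm_inf_eigenspace_omegaOp :
    FourForm ⊓ Module.End.eigenspace OmegaOp 4 = FourForm ⊓ LinearMap.ker (contract Phi) := by
  ext σ
  simp only [Submodule.mem_inf, Module.End.mem_eigenspace_iff, LinearMap.mem_ker]
  exact and_congr_right omegaOp_eq_four_smul_iff

/-- A 4-form `σ` satisfies `Ω_Φ(σ) = 4σ` iff `σ_{ijkl}Φ_{mjkl} = 0` for all `i,m`; this
eigenspace `Λ⁴₂₇` has dimension 27. -/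
theorem spin7_omega_eigenvalue_four :
    (∀ σ, σ ∈ FourForm →
      ((∀ i j k l, OmegaOp σ i j k l = 4 * σ i j k l) ↔
        ∀ i m, (∑ j, ∑ k, ∑ l, σ i j k l * Phi m j k l) = 0)) ∧
    Module.finrank ℝ ↥(FourForm ⊓ Module.End.eigenspace OmegaOp 4) = 27 := by
  constructor
  · intro σ hσ
    have hiff := omegaOp_eq_four_smul_iff hσ
    simp only [funext_iff, ← Matrix.ext_iff] at hiff
    exact hiff
  · have hdim := finrank_map_add_finrank_inf_ker (contract Phi) FourForm
    rw [finrank_map_contract, finrank_fourForm] at hdim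
    rw [fourForm_inf_eigenspace_omegaOp]
    exact Nat.add_left_cancel (hdim : 43 + _ = 43 + 27)
end
end
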